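/- arXiv:math/9909168 — 12 statements merged into one kernel-verified Lean document; each statement's English description precedes it below -/
import Mathlib

section
/- Let k be a field and S = k[x₁,…,xₙ] a polynomial ring in n variables. If 𝓘 is an infinite collection of monomial ideals of S, then there exist two distinct ideals I, J ∈ 𝓘 with I ⊆ J. Equivalently, the poset of monomial ideals of S ordered by inclusion contains no infinite antichain. -/
/-- An ideal of `k[x₁,…,xₙ]` is a *monomial ideal* if it is generated by a set of
monomials `x^u` with `u ∈ ℕⁿ`. -/
def IsMonomialIdeal {k : Type*} [Field k] {n : ℕ}
    (I : Ideal (MvPolynomial (Fin n) k)) : Prop :=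
  ∃ U : Set (Fin n →₀ ℕ),
    I = Ideal.span ((fun u => MvPolynomial.monomial u (1 : k)) '' U)

/-- Positionwise consequence of the Higman embedding order. -/
theorem sublistForall_getElem {α : Type*} {r : α → α → Prop} {l₁ l₂ : List α}
    (h : List.SublistForall₂ r l₁ l₂) :
    ∀ (t : ℕ) (ht : t < l₁.length), ∃ (t' : ℕ) (ht' : t' < l₂.length),
      t ≤ t' ∧ r l₁[t] l₂[t'] := by
  induction h with
  | nil => intro t ht; simp at ht
  | cons hr _ ih =>
    intro t ht
    cases t with
    | zero => exact ⟨0, by simp, le_rfl, by simpa using hr⟩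
    | succ t =>
      obtain ⟨t', h1, h2, h3⟩ := ih t (by simpa using ht)
      exact ⟨t' + 1, by simpa using h1, by omega, by simpa using h3⟩
  | cons_right _ ih =>
    intro t ht
    obtain ⟨t', h1, h2, h3⟩ := ih t ht
    exact ⟨t' + 1, by simpa using h1, by omega, by simpa using h3⟩

/-- The slice of an upper set at first coordinate `t`. -/
def upperSlice {n : ℕ} (U : UpperSet (Fin (n + 1) → ℕ)) (t : ℕ) : UpperSet (Fin n → ℕ) where
  carrier := {v | (Fin.cons t v : Fin (n + 1) → ℕ) ∈ U}
  upper' := by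
    intro a b hab ha
    refine U.upper ?_ ha
    intro i
    refine Fin.cases ?_ (fun j => ?_) i
    · simp
    · simpa using hab j

theorem mem_upperSlice {n : ℕ} (U : UpperSet (Fin (n + 1) → ℕ)) (t : ℕ) (v : Fin n → ℕ) :
    v ∈ upperSlice U t ↔ (Fin.cons t v : Fin (n + 1) → ℕ) ∈ U := Iff.rfl

theorem upperSlice_antitone {n : ℕ} (U : UpperSet (Fin (n + 1) → ℕ)) :
    Antitone (upperSlice U) := by
  intro s t hst v hv
  refine U.upper ?_ hv
  intro i
  refine Fin.cases ?_ (fun j => ?_) i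
  · simpa using hst
  · simp

theorem upperSet_le_of_slices {n : ℕ} {U V : UpperSet (Fin (n + 1) → ℕ)}
    (h : ∀ t, upperSlice U t ≤ upperSlice V t) : U ≤ V := by
  intro v hv
  have h1 : Fin.tail v ∈ upperSlice V (v 0) := by
    rw [mem_upperSlice, Fin.cons_self_tail]; exact hv
  have h2 : Fin.tail v ∈ upperSlice U (v 0) := h (v 0) h1
  rw [mem_upperSlice, Fin.cons_self_tail] at h2
  exact h2

/-- Upper sets of `ℕⁿ` are well-quasi-ordered by reverse inclusion. -/
theorem upperSet_wqo (n : ℕ) : WellQuasiOrderedLE (UpperSet (Fin n → ℕ)) := by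
  induction n with
  | zero =>
    have : Finite (UpperSet (Fin 0 → ℕ)) :=
      Finite.of_injective (fun U => (U : Set (Fin 0 → ℕ))) SetLike.coe_injective
    exact Finite.to_wellQuasiOrderedLE
  | succ n ih =>
    have stab : ∀ U : UpperSet (Fin (n + 1) → ℕ),
        ∃ N, ∀ t, N ≤ t → upperSlice U t = upperSlice U N := by
      intro U
      obtain ⟨_, ⟨N, rfl⟩, hN⟩ := (wellFounded_lt (α := UpperSet (Fin n → ℕ))).has_min
        (Set.range (upperSlice U)) ⟨_, 0, rfl⟩
      refine ⟨N, fun t ht => ?_⟩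
      exact eq_of_le_of_not_lt (upperSlice_antitone U ht) (hN _ ⟨t, rfl⟩)
    choose N hN using stab
    have hH : WellQuasiOrdered
        (List.SublistForall₂ (fun a b : UpperSet (Fin n → ℕ) => a ≤ b)) := by
      have := Set.PartiallyWellOrderedOn.partiallyWellOrderedOn_sublistForall₂
        (fun a b : UpperSet (Fin n → ℕ) => a ≤ b)
        (Set.partiallyWellOrderedOn_univ_iff.2 ih.wqo)
      exact Set.partiallyWellOrderedOn_univ_iff.1 (by simpa using this)
    have : IsPreorder (List (UpperSet (Fin n → ℕ)))
        (List.SublistForall₂ (fun a b : UpperSet (Fin n → ℕ) => a ≤ b)) := { }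
    refine ⟨fun f => ?_⟩
    obtain ⟨i, j, hij, h1, h2⟩ := hH.prod ih.wqo (fun m =>
      ((List.range (N (f m))).map (upperSlice (f m)), upperSlice (f m) (N (f m))))
    refine ⟨i, j, hij, upperSet_le_of_slices fun t => ?_⟩
    rcases lt_or_ge t (N (f i)) with ht | ht
    · obtain ⟨t', ht', htt, hle⟩ := sublistForall_getElem h1 t (by simpa using ht)
      simp only [List.getElem_map, List.getElem_range] at hle
      exact hle.trans (upperSlice_antitone _ htt)
    · rw [hN _ t ht]
      refine h2.trans ?_
      rcases le_total t (N (f j)) with h | h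
      · exact upperSlice_antitone _ h
      · exact (hN _ t h).ge

/-- The exponents of monomials in an ideal form an upper set. -/
def exponentSet {k : Type*} [Field k] {n : ℕ} (I : Ideal (MvPolynomial (Fin n) k)) :
    UpperSet (Fin n → ℕ) where
  carrier := {v | MvPolynomial.monomial (Finsupp.equivFunOnFinite.symm v) (1 : k) ∈ I}
  upper' := by
    intro a b hab ha
    have hb : Finsupp.equivFunOnFinite.symm b =
        Finsupp.equivFunOnFinite.symm (b - a) + Finsupp.equivFunOnFinite.symm a := by
      ext i
      have hi : a i ≤ b i := hab i
      simp only [Finsupp.add_apply, Finsupp.equivFunOnFinite_symm_apply_apply, Pi.sub_apply]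
      omega
    have := I.mul_mem_left
      (MvPolynomial.monomial (Finsupp.equivFunOnFinite.symm (b - a)) (1 : k)) ha
    rw [MvPolynomial.monomial_mul, one_mul, ← hb] at this
    exact this

theorem le_of_exponentSet_le {k : Type*} [Field k] {n : ℕ}
    {I J : Ideal (MvPolynomial (Fin n) k)} (hJ : IsMonomialIdeal J)
    (h : exponentSet I ≤ exponentSet J) : J ≤ I := by
  obtain ⟨U, hU⟩ := hJ
  have key : ∀ u ∈ U, MvPolynomial.monomial u (1 : k) ∈ I := by
    intro u hu
    have h1 : Finsupp.equivFunOnFinite u ∈ exponentSet J := by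
      change MvPolynomial.monomial
        (Finsupp.equivFunOnFinite.symm (Finsupp.equivFunOnFinite u)) (1 : k) ∈ J
      rw [Equiv.symm_apply_apply, hU]
      exact Ideal.subset_span ⟨u, hu, rfl⟩
    have h2 := h h1
    change MvPolynomial.monomial
        (Finsupp.equivFunOnFinite.symm (Finsupp.equivFunOnFinite u)) (1 : k) ∈ I at h2
    rwa [Equiv.symm_apply_apply] at h2
  rw [hU, Ideal.span_le]
  rintro _ ⟨u, hu, rfl⟩
  exact key u hu

/-- **Antichains of monomial ideals are finite.**  If `𝓘` is an infinite collection of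
monomial ideals of `k[x₁,…,xₙ]`, then there exist two distinct ideals `I, J ∈ 𝓘`
with `I ⊆ J`. -/
theorem monomialIdeals_no_infinite_antichain {k : Type*} [Field k] {n : ℕ}
    (𝓘 : Set (Ideal (MvPolynomial (Fin n) k)))
    (hmono : ∀ I ∈ 𝓘, IsMonomialIdeal I) (hinf : 𝓘.Infinite) :
    ∃ I ∈ 𝓘, ∃ J ∈ 𝓘, I ≠ J ∧ I ≤ J := by
  let e := hinf.natEmbedding
  obtain ⟨i, j, hij, h⟩ := (upperSet_wqo n).wqo (fun m => exponentSet (e m).1)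
  refine ⟨e j, (e j).2, e i, (e i).2, ?_, le_of_exponentSet_le (hmono _ (e j).2) h⟩
  intro heq
  exact hij.ne' (e.injective (Subtype.ext heq))
end

section
/- All antichains in the generalized Young's lattice are finite: every collection of finite order ideals of ℕⁿ that are pairwise incomparable under inclusion is a finite collection. -/
theorem finite_lowerSets_pwo (n : ℕ) :
    {D : Set (Fin n → ℕ) | IsLowerSet D ∧ D.Finite}.PartiallyWellOrderedOn (· ⊆ ·) := by
  induction n with
  | zero => exact (Set.toFinite _).partiallyWellOrderedOn
  | succ n ih =>
    have : IsPreorder (Set (Fin n → ℕ)) (· ⊆ ·) :=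
      { refl := fun a => subset_rfl, trans := fun a b c h h' => h.trans h' }
    have hig := Set.PartiallyWellOrderedOn.partiallyWellOrderedOn_sublistForall₂ _ ih
    rw [Set.partiallyWellOrderedOn_iff_exists_lt] at hig ⊢
    intro f hf
    let sl : ℕ → ℕ → Set (Fin n → ℕ) := fun m k => {v | (Fin.cons k v : Fin (n+1) → ℕ) ∈ f m}
    have hN : ∀ m, ∃ N, ∀ v ∈ f m, v 0 < N := by
      intro m
      obtain ⟨N, hN⟩ := ((hf m).2.image (fun v => v 0)).bddAbove
      exact ⟨N + 1, fun v hv => Nat.lt_succ_of_le (hN ⟨v, hv, rfl⟩)⟩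
    choose N hN using hN
    have hanti : ∀ m k l, k ≤ l → sl m l ⊆ sl m k := by
      intro m k l hkl v hv
      refine (hf m).1 ?_ hv
      exact Fin.cons_le_cons.2 ⟨hkl, le_rfl⟩
    obtain ⟨a, b, hab, h⟩ := hig (fun m => (List.range (N m)).map (sl m)) (by
      intro m x hx
      obtain ⟨k, -, rfl⟩ := List.mem_map.1 hx
      refine ⟨fun v w hwv hv => (hf m).1 (Fin.cons_le_cons.2 ⟨le_rfl, hwv⟩) hv, ?_⟩
      exact (hf m).2.preimage ((Fin.cons_right_injective _).injOn))
    refine ⟨a, b, hab, ?_⟩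
    obtain ⟨l, hl, hsub⟩ := List.sublistForall₂_iff.1 h
    obtain ⟨g, hg⟩ := List.sublist_iff_exists_orderEmbedding_getElem?_eq.1 hsub
    obtain ⟨hlen, hl⟩ := List.forall₂_iff_get.1 hl
    intro v hv
    have hk := hN a v hv
    have h1 : v 0 < ((List.range (N a)).map (sl a)).length := by simpa using hk
    have h2 : v 0 < l.length := hlen ▸ h1
    have h3 := hl (v 0) h1 h2
    have h4 := hg (v 0)
    rw [List.getElem?_eq_getElem h2] at h4
    obtain ⟨h5, h6⟩ := List.getElem?_eq_some_iff.1 h4.symm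
    simp only [List.get_eq_getElem, List.getElem_map, List.getElem_range] at h3 h6
    rw [← h6] at h3
    have h7 : Fin.tail v ∈ sl a (v 0) := by
      change Fin.cons (v 0) (Fin.tail v) ∈ f a
      rwa [Fin.cons_self_tail]
    have h8 := hanti b _ _ (g.strictMono.le_apply (x := v 0)) (h3 h7)
    change Fin.cons (v 0) (Fin.tail v) ∈ f b at h8
    rwa [Fin.cons_self_tail] at h8


/-- **Antichains in the generalized Young's lattice are finite.**  Every collection of
finite order ideals (finite lower sets) of `ℕⁿ`, pairwise incomparable under
inclusion, is finite. -/
theorem generalizedYoung_no_infinite_antichain {n : ℕ}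
    (𝓐 : Set (Set (Fin n → ℕ)))
    (hlow : ∀ D ∈ 𝓐, IsLowerSet D ∧ D.Finite)
    (hac : IsAntichain (· ⊆ ·) 𝓐) : 𝓐.Finite := by
  exact hac.finite_of_partiallyWellOrderedOn ((finite_lowerSets_pwo n).mono hlow)
end

section
/- Fix degree vectors d₁,…,dₙ ∈ ℕ^d for the variables x₁,…,xₙ, so that the monomial x^u has degree deg(x^u) = Σᵢ uᵢdᵢ ∈ ℕ^d. For any function H : ℕ^d → ℕ, the set of monomial ideals I of S = k[x₁,…,xₙ] such that for every b ∈ ℕ^d the set of exponent vectors u ∈ ℕⁿ with deg(x^u) = b and x^u ∉ I is finite with exactly H(b) elements, is a finite set. In other words, there are only finitely many monomial ideals with a given Hilbert series with respect to a given ℕ^d-grading. -/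
/-- **Finitely many monomial ideals with a given Hilbert series.**  Fix degree
vectors `dv 1, …, dv n ∈ ℕ^d` for the variables, so `deg (x^u) = ∑ᵢ uᵢ • dv i`.
For any prescribed Hilbert function `H : ℕ^d → ℕ`, the set of monomial ideals `I`
such that for every `b ∈ ℕ^d` the set of monomials of degree `b` outside `I` is
finite of cardinality `H b`, is finite. -/
theorem finitely_many_monomialIdeals_with_given_hilbert_series
    {k : Type*} [Field k] {n d : ℕ} (dv : Fin n → (Fin d → ℕ))
    (H : (Fin d → ℕ) → ℕ) :
    { I : Ideal (MvPolynomial (Fin n) k) | IsMonomialIdeal I ∧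
      ∀ b : Fin d → ℕ,
        ({ u : Fin n →₀ ℕ | (∑ i, u i • dv i) = b ∧
            MvPolynomial.monomial u (1 : k) ∉ I }).Finite ∧
        ({ u : Fin n →₀ ℕ | (∑ i, u i • dv i) = b ∧
            MvPolynomial.monomial u (1 : k) ∉ I }).ncard = H b }.Finite := by
  classical
  by_contra hinf
  set S : Set (Ideal (MvPolynomial (Fin n) k)) := { I | IsMonomialIdeal I ∧
      ∀ b : Fin d → ℕ,
        ({ u : Fin n →₀ ℕ | (∑ i, u i • dv i) = b ∧
            MvPolynomial.monomial u (1 : k) ∉ I }).Finite ∧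
        ({ u : Fin n →₀ ℕ | (∑ i, u i • dv i) = b ∧
            MvPolynomial.monomial u (1 : k) ∉ I }).ncard = H b } with hS
  haveI : Infinite S := Set.infinite_coe_iff.mpr hinf
  -- a nonprincipal ultrafilter on the set of ideals, and the limit set of monomials
  let F : Ultrafilter S := Filter.hyperfilter S
  let JU : Set (Fin n →₀ ℕ) :=
    {u | ∀ᶠ I : S in (F : Filter S), MvPolynomial.monomial u (1 : k) ∈ I.1}
  have hnot : ∀ u, u ∉ JU →
      ∀ᶠ I : S in (F : Filter S), MvPolynomial.monomial u (1 : k) ∉ I.1 := by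
    intro u hu
    exact Ultrafilter.eventually_not.mpr hu
  -- the limit is contained in almost every ideal, by Noetherianity
  have hle : ∀ᶠ I : S in (F : Filter S), ∀ u ∈ JU,
      MvPolynomial.monomial u (1 : k) ∈ I.1 := by
    obtain ⟨t, ht, hspan⟩ := (Submodule.fg_span_iff_fg_span_finset_subset
      ((fun u => MvPolynomial.monomial u (1 : k)) '' JU)).mp
      (IsNoetherian.noetherian (R := MvPolynomial (Fin n) k) _)
    have h1 : ∀ᶠ I : S in (F : Filter S), ∀ p ∈ t, p ∈ I.1 := by
      rw [Filter.eventually_all_finset]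
      intro p hp
      obtain ⟨u, hu, rfl⟩ := ht hp
      exact hu
    filter_upwards [h1] with I hI u hu
    have h2 : Submodule.span (MvPolynomial (Fin n) k) (t : Set _) ≤ I.1 :=
      Submodule.span_le.mpr hI
    rw [← hspan] at h2
    exact h2 (Submodule.subset_span ⟨u, hu, rfl⟩)
  -- hence almost every ideal has exactly the monomials of the limit
  have heq : ∀ I : S, (∀ u ∈ JU, MvPolynomial.monomial u (1 : k) ∈ I.1) →
      ∀ u, MvPolynomial.monomial u (1 : k) ∈ I.1 → u ∈ JU := by
    intro I hI u hu
    by_contra huJ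
    obtain ⟨hfin, hcard⟩ := I.2.2 (∑ i, u i • dv i)
    have h3 : ∀ᶠ I' : S in (F : Filter S), ∀ v ∈ insert u hfin.toFinset,
        MvPolynomial.monomial v (1 : k) ∉ I'.1 := by
      rw [Filter.eventually_all_finset]
      intro v hv
      apply hnot
      rcases Finset.mem_insert.mp hv with rfl | hv
      · exact huJ
      · intro hvJ
        exact ((Set.Finite.mem_toFinset _).mp hv).2 (hI v hvJ)
    obtain ⟨I', hI'⟩ := h3.exists
    obtain ⟨hfin', hcard'⟩ := I'.2.2 (∑ i, u i • dv i)
    have hsub : insert u hfin.toFinset ⊆ hfin'.toFinset := by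
      intro v hv
      refine (Set.Finite.mem_toFinset _).mpr ⟨?_, hI' v hv⟩
      rcases Finset.mem_insert.mp hv with rfl | hv
      · rfl
      · exact ((Set.Finite.mem_toFinset _).mp hv).1
    have hun : u ∉ hfin.toFinset := fun h =>
      ((Set.Finite.mem_toFinset _).mp h).2 hu
    have hc := Finset.card_le_card hsub
    rw [Finset.card_insert_of_notMem hun, ← Set.ncard_eq_toFinset_card _ hfin,
      ← Set.ncard_eq_toFinset_card _ hfin', hcard, hcard'] at hc
    omega
  have hmono : ∀ I J : S, (∀ u, MvPolynomial.monomial u (1 : k) ∈ I.1 →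
      MvPolynomial.monomial u (1 : k) ∈ J.1) → I.1 ≤ J.1 := by
    intro I J h
    obtain ⟨U, hU⟩ := I.2.1
    have h4 : Ideal.span ((fun u => MvPolynomial.monomial u (1 : k)) '' U) ≤ J.1 := by
      rw [Ideal.span_le]
      rintro _ ⟨u, hu, rfl⟩
      apply h
      rw [hU]
      exact Ideal.subset_span ⟨u, hu, rfl⟩
    exact hU.le.trans h4
  obtain ⟨I₀, hI₀⟩ := hle.exists
  have hne : ∀ᶠ I : S in (F : Filter S), I ≠ I₀ := by
    apply Filter.hyperfilter_le_cofinite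
    exact (Set.finite_singleton I₀).compl_mem_cofinite
  obtain ⟨I, hI, hII⟩ := (hle.and hne).exists
  exact hII (Subtype.ext (le_antisymm
    (hmono I I₀ fun u hu => hI₀ u (heq I hI u hu))
    (hmono I₀ I fun u hu => hI u (heq I₀ hI₀ u hu))))
end

section
/- Let k be a field, d, n ∈ ℕ, and a₁,…,aₙ ∈ ℕ^d. Let R be a commutative k-algebra equipped with an ℕ^d-grading R = ⊕_{b ∈ ℕ^d} R_b, generated as a k-algebra by homogeneous elements x₁,…,xₙ with xᵢ ∈ R_{aᵢ}, such that dim_k R_b = 1 whenever b lies in the submonoid ℕA of ℕ^d generated by a₁,…,aₙ, and R_b = 0 otherwise. If 𝓘 is an infinite collection of ideals of R that are homogeneous with respect to this grading, then there are two distinct ideals I, J ∈ 𝓘 with I ⊆ J. -/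
/-- The complement of a finitely generated upper set of `ℕⁿ` is a finite union of boxes. -/
theorem boxes_of_finite_gens {n : ℕ} (S : List (Fin n → ℕ)) :
    ∃ L : List (Fin n → ℕ∞), ∀ w : Fin n → ℕ,
      (∀ g ∈ S, ¬ g ≤ w) ↔ ∃ v ∈ L, ∀ i, (w i : ℕ∞) < v i := by
  induction S with
  | nil => exact ⟨[fun _ => ⊤], fun w => by simp⟩
  | cons g S ih =>
    obtain ⟨L, hL⟩ := ih
    refine ⟨L.flatMap fun v => (List.finRange n).map fun i =>
      Function.update v i (min (v i) (g i : ℕ∞)), fun w => ?_⟩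
    simp only [List.mem_cons, forall_eq_or_imp, hL, List.mem_flatMap, List.mem_map,
      List.mem_finRange, true_and]
    constructor
    · rintro ⟨hg, v, hv, hw⟩
      rw [Pi.le_def] at hg
      push Not at hg
      obtain ⟨i, hi⟩ := hg
      refine ⟨_, ⟨v, hv, i, rfl⟩, fun j => ?_⟩
      by_cases hj : j = i
      · subst hj
        simp only [Function.update_self, lt_min_iff]
        exact ⟨hw j, by exact_mod_cast hi⟩
      · simpa [Function.update_of_ne hj] using hw j
    · rintro ⟨_, ⟨v, hv, i, rfl⟩, h⟩
      have hi := h i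
      simp only [Function.update_self, lt_min_iff] at hi
      refine ⟨fun hg => ?_, v, hv, fun j => ?_⟩
      · have h2 : w i < g i := by exact_mod_cast hi.2
        exact absurd (hg i) (not_le.mpr h2)
      · by_cases hj : j = i
        · subst hj; exact hi.1
        · simpa [Function.update_of_ne hj] using h j

/-- Every upper set of `ℕⁿ` is finitely generated (Dickson). -/
theorem finite_gens_of_isUpperSet {n : ℕ} (U : Set (Fin n → ℕ)) (hU : IsUpperSet U) :
    ∃ S : List (Fin n → ℕ), ∀ w, w ∈ U ↔ ∃ g ∈ S, g ≤ w := by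
  have hfin : {g | Minimal (· ∈ U) g}.Finite :=
    WellQuasiOrderedLE.finite_of_isAntichain (setOfPred_minimal_antichain _)
  refine ⟨hfin.toFinset.toList, fun w => ⟨fun hw => ?_, ?_⟩⟩
  · obtain ⟨g, hg, hm⟩ := exists_minimal_le_of_wellFoundedLT (· ∈ U) w hw
    exact ⟨g, by simpa using hm, hg⟩
  · rintro ⟨g, hg, hgw⟩
    have : Minimal (· ∈ U) g := by simpa using hg
    exact hU hgw this.prop

/-- Maclagan's theorem: upper sets of `ℕⁿ` are well-quasi-ordered by reverse inclusion. -/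
theorem upperSets_wqo {n : ℕ} (U : ℕ → Set (Fin n → ℕ)) (hU : ∀ m, IsUpperSet (U m)) :
    ∃ p q, p < q ∧ U q ⊆ U p := by
  have key : ∀ m, ∃ L : List (Fin n → ℕ∞), ∀ w : Fin n → ℕ,
      w ∉ U m ↔ ∃ v ∈ L, ∀ i, (w i : ℕ∞) < v i := by
    intro m
    obtain ⟨S, hS⟩ := finite_gens_of_isUpperSet (U m) (hU m)
    obtain ⟨L, hL⟩ := boxes_of_finite_gens S
    refine ⟨L, fun w => ?_⟩
    rw [← hL, hS]
    push Not
    rfl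
  choose L hL using key
  have hpwo : (Set.univ : Set (Fin n → ℕ∞)).PartiallyWellOrderedOn (· ≤ ·) :=
    Set.partiallyWellOrderedOn_of_wellQuasiOrdered wellQuasiOrdered_le _
  have hh := Set.PartiallyWellOrderedOn.partiallyWellOrderedOn_sublistForall₂ (· ≤ ·) hpwo
  obtain ⟨p, q, hpq, h⟩ := hh.exists_lt (f := L) (fun m => by simp)
  refine ⟨p, q, hpq, fun w hw => ?_⟩
  by_contra hwp
  obtain ⟨v, hv, hlt⟩ := (hL p w).1 hwp
  obtain ⟨l, hl, hsub⟩ := List.sublistForall₂_iff.1 h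
  obtain ⟨i, hi, rfl⟩ := List.getElem_of_mem hv
  have hi' : i < l.length := hl.length_eq ▸ hi
  have hle : (L p)[i] ≤ l[i] := hl.get hi hi'
  exact (hL q w).2 ⟨l[i], hsub.subset (List.getElem_mem hi'),
    fun j => (hlt j).trans_le (hle j)⟩ hw


/-- **Antichains of homogeneous ideals in an A-graded algebra are finite.**
Let `R` be a commutative `k`-algebra with an `ℕ^d`-grading `𝒜`, generated as a
`k`-algebra by homogeneous elements `x₁,…,xₙ` with `xᵢ ∈ 𝒜 (a i)`, such that
`dim_k R_b = 1` for `b` in the submonoid `ℕA` of `ℕ^d` generated by the `a i`,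
and `R_b = 0` otherwise.  Then any infinite collection of homogeneous ideals of
`R` contains two distinct ideals `I ⊆ J`. -/
theorem aGradedAlgebra_homogeneousIdeals_no_infinite_antichain
    {k : Type*} [Field k] {d n : ℕ} (a : Fin n → (Fin d → ℕ))
    {R : Type*} [CommRing R] [Algebra k R]
    (𝒜 : (Fin d → ℕ) → Submodule k R) [GradedAlgebra 𝒜]
    (x : Fin n → R) (hx : ∀ i, x i ∈ 𝒜 (a i))
    (hgen : Algebra.adjoin k (Set.range x) = ⊤)
    (hdim1 : ∀ b ∈ AddSubmonoid.closure (Set.range a), Module.rank k (𝒜 b) = 1)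
    (hdim0 : ∀ b ∉ AddSubmonoid.closure (Set.range a), 𝒜 b = ⊥)
    (𝓘 : Set (Ideal R)) (hhom : ∀ I ∈ 𝓘, Ideal.IsHomogeneous 𝒜 I)
    (hinf : 𝓘.Infinite) :
    ∃ I ∈ 𝓘, ∃ J ∈ 𝓘, I ≠ J ∧ I ≤ J := by
  classical
  let mon : (Fin n → ℕ) → R := fun w => ∏ i, x i ^ w i
  have hmon : ∀ w, mon w ∈ 𝒜 (∑ i, w i • a i) := by
    intro w
    exact SetLike.prod_mem_graded 𝒜 _ _ (fun i _ => SetLike.pow_mem_graded (w i) (hx i))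
  have hclos : ∀ w : Fin n → ℕ, (∑ i, w i • a i) ∈ AddSubmonoid.closure (Set.range a) := by
    intro w
    exact sum_mem fun i _ => nsmul_mem (AddSubmonoid.subset_closure (Set.mem_range_self i)) _
  let f := hinf.natEmbedding
  let U : ℕ → Set (Fin n → ℕ) := fun m => {w | mon w ∈ (f m).1}
  have hU : ∀ m, IsUpperSet (U m) := by
    intro m v w hvw hv
    have h : mon w = mon v * mon (w - v) := by
      simp only [mon, ← Finset.prod_mul_distrib, ← pow_add]
      refine Finset.prod_congr rfl fun i _ => ?_
      rw [Pi.sub_apply, Nat.add_sub_cancel' (hvw i)]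
    change mon w ∈ (f m).1
    rw [h]
    exact Ideal.mul_mem_right _ _ hv
  obtain ⟨p, q, hpq, hsub⟩ := upperSets_wqo U hU
  refine ⟨f q, (f q).2, f p, (f p).2, ?_, ?_⟩
  · intro h
    exact hpq.ne' (f.injective (Subtype.ext h))
  have hI := hhom _ (f q).2
  -- homogeneous elements
  have hom : ∀ b, ∀ r ∈ 𝒜 b, r ∈ (f q).1 → r ∈ (f p).1 := by
    intro b r hr hrI
    by_cases hr0 : r = 0
    · rw [hr0]; exact zero_mem _
    have hmem : ∀ w, (∑ i, w i • a i) = b → mon w ∈ (f p).1 := by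
      intro w hw
      apply hsub
      change mon w ∈ (f q).1
      have hrank := hdim1 _ (hclos w)
      have hfr : Module.finrank k (𝒜 (∑ i, w i • a i)) = 1 :=
        Module.finrank_eq_of_rank_eq (by simpa using hrank)
      rw [hw] at hfr
      obtain ⟨c, hc⟩ := (finrank_eq_one_iff_of_nonzero' (⟨r, hr⟩ : 𝒜 b)
        (by simpa [Subtype.ext_iff] using hr0)).1 hfr ⟨mon w, hw ▸ hmon w⟩
      have hc' : c • r = mon w := congrArg Subtype.val hc
      rw [← hc', Algebra.smul_def]
      exact Ideal.mul_mem_left _ _ hrI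
    have hrT : r ∈ Algebra.adjoin k (Set.range x) := by rw [hgen]; trivial
    rw [Algebra.adjoin_range_eq_range_aeval] at hrT
    obtain ⟨P, hP⟩ := hrT
    have hP' : r = ∑ w ∈ P.support, algebraMap k R (P.coeff w) * mon w := by
      rw [← hP]
      change MvPolynomial.aeval x P = _
      rw [MvPolynomial.aeval_def, MvPolynomial.eval₂_eq']
    have hproj : r = GradedRing.proj 𝒜 b r := by
      rw [GradedRing.proj_apply, DirectSum.decompose_of_mem_same 𝒜 hr]
    rw [hproj, hP', map_sum]
    refine sum_mem fun w _ => ?_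
    have hm : algebraMap k R (P.coeff w) * mon w ∈ 𝒜 (∑ i, w i • a i) := by
      rw [← Algebra.smul_def]
      exact Submodule.smul_mem _ _ (hmon w)
    rw [GradedRing.proj_apply]
    by_cases hw : (∑ i, w i • a i) = b
    · rw [hw] at hm
      rw [DirectSum.decompose_of_mem_same 𝒜 hm]
      exact Ideal.mul_mem_left _ _ (hmem w hw)
    · rw [DirectSum.decompose_of_mem_ne 𝒜 hm hw]
      exact zero_mem _
  intro r hr
  rw [← DirectSum.sum_support_decompose 𝒜 r]
  exact sum_mem fun b _ => hom b _ (SetLike.coe_mem _) (hI b hr)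
end

section
/- Let A be a d×n matrix with entries in ℕ, each of whose columns is nonzero, and let π : ℕⁿ → ℕ^d be given by π(u) = Au. For b in the image ℕA of π, let P_b ⊂ ℝⁿ be the convex hull of the (finite) fiber π⁻¹(b). Call b ∈ ℕA atomic if there do not exist nonzero b₁, b₂ ∈ ℕA with b₁ + b₂ = b and P_b = P_{b₁} + P_{b₂}, where + denotes Minkowski sum. Then the set of atomic b ∈ ℕA is finite. -/
open Pointwise

/-- The fiber polytope `P_b = conv(π⁻¹(b)) ⊆ ℝⁿ`, where `π : ℕⁿ → ℕ^d` is
`π(u) = Au`. -/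
def fiberPolytope {d n : ℕ} (A : Matrix (Fin d) (Fin n) ℕ)
    (b : Fin d → ℕ) : Set (Fin n → ℝ) :=
  convexHull ℝ ((fun u : Fin n → ℕ => fun i => (u i : ℝ)) ''
    { u : Fin n → ℕ | A.mulVec u = b })

/-- Every lower set of `ℕⁿ` is a finite union of boxes with corners in `(ℕ ∪ {∞})ⁿ`. -/
lemma lowerSet_boxes {n : ℕ} (D : Set (Fin n → ℕ)) (hD : IsLowerSet D) :
    ∃ L : List (Fin n → ℕ∞), ∀ x : Fin n → ℕ,
      x ∈ D ↔ ∃ a ∈ L, (fun i => (x i : ℕ∞)) ≤ a := by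
  let M : Set (Fin n → ℕ∞) := {a | ∀ x : Fin n → ℕ, (fun i => (x i : ℕ∞)) ≤ a → x ∈ D}
  have hfin : {a | Maximal (· ∈ M) a}.Finite :=
    WellQuasiOrderedLE.finite_of_isAntichain (setOfPred_maximal_antichain (· ∈ M))
  have hz : ∀ a ∈ M, ∃ m, a ≤ m ∧ Maximal (· ∈ M) m := by
    apply zorn_le_nonempty₀
    intro C hCM hC y hy
    refine ⟨sSup C, ?_, fun z hz => le_sSup hz⟩
    intro x hx
    have h1 : ∀ i, ∃ c ∈ C, (x i : ℕ∞) ≤ c i := by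
      intro i
      by_contra! hcon
      have h2 := hx i
      rw [sSup_apply] at h2
      rcases hxi : x i with _ | m
      · have := hcon y hy
        simp [hxi] at this
      · have h3 : (⨆ f : C, (f : Fin n → ℕ∞) i) ≤ (m : ℕ∞) := by
          apply iSup_le
          rintro ⟨c, hc⟩
          have h4 := hcon c hc
          rw [hxi] at h4
          push_cast at h4
          exact Order.le_of_lt_add_one h4
        have h5 : ((x i : ℕ) : ℕ∞) ≤ (m : ℕ∞) := h2.trans h3
        rw [hxi] at h5
        have h6 := Nat.cast_le.mp h5
        omega
    have h2 : ∀ s : Finset (Fin n), ∃ c ∈ C, ∀ i ∈ s, (x i : ℕ∞) ≤ c i := by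
      intro s
      induction s using Finset.induction_on with
      | empty => exact ⟨y, hy, by simp⟩
      | insert j s hj ih =>
        obtain ⟨c, hc, h⟩ := ih
        obtain ⟨e, he, h'⟩ := h1 j
        rcases hC.total hc he with hle | hle
        · refine ⟨e, he, fun i hi => ?_⟩
          rcases Finset.mem_insert.mp hi with rfl | hi
          · exact h'
          · exact (h i hi).trans (hle i)
        · refine ⟨c, hc, fun i hi => ?_⟩
          rcases Finset.mem_insert.mp hi with rfl | hi
          · exact h'.trans (hle _)
          · exact h i hi
    obtain ⟨c, hc, h⟩ := h2 Finset.univ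
    exact hCM hc x (fun i => h i (Finset.mem_univ i))
  refine ⟨hfin.toFinset.toList, fun x => ⟨fun hx => ?_, ?_⟩⟩
  · obtain ⟨m, hm, hmax⟩ := hz (fun i => (x i : ℕ∞)) (by
      intro z hz
      exact hD (fun i => Nat.cast_le.mp (hz i)) hx)
    exact ⟨m, by simpa using hmax, hm⟩
  · rintro ⟨a, ha, hxa⟩
    have ha' : Maximal (· ∈ M) a := by simpa using ha
    exact ha'.prop x hxa

/-- Maclagan's theorem: any sequence of lower sets of `ℕⁿ` has an increasing pair. -/
lemma lowerSet_wqo {n : ℕ} (D : ℕ → Set (Fin n → ℕ)) (hD : ∀ k, IsLowerSet (D k)) :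
    ∃ i j, i < j ∧ D i ⊆ D j := by
  choose L hL using fun k => lowerSet_boxes (D k) (hD k)
  have hp := Set.PartiallyWellOrderedOn.partiallyWellOrderedOn_sublistForall₂
    (α := Fin n → ℕ∞) (· ≤ ·) (Set.isPWO_of_wellQuasiOrderedLE Set.univ)
  obtain ⟨i, j, hij, h⟩ := hp.exists_lt (f := L) (fun k => by simp)
  refine ⟨i, j, hij, fun x hx => ?_⟩
  obtain ⟨a, ha, hxa⟩ := (hL i x).mp hx
  obtain ⟨l, hl, hsub⟩ := List.sublistForall₂_iff.mp h
  have key : ∀ {l₁ l₂ : List (Fin n → ℕ∞)}, List.Forall₂ (· ≤ ·) l₁ l₂ →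
      ∀ a ∈ l₁, ∃ b ∈ l₂, a ≤ b := by
    intro l₁ l₂ h
    induction h with
    | nil => simp
    | @cons p q l₁ l₂ hpq _ ih =>
      intro a ha
      rcases List.mem_cons.mp ha with rfl | ha
      · exact ⟨q, by simp, hpq⟩
      · obtain ⟨b, hb, hab⟩ := ih a ha
        exact ⟨b, by simp [hb], hab⟩
  obtain ⟨b, hb, hab⟩ := key hl a ha
  exact (hL j x).mpr ⟨b, hsub.subset hb, hxa.trans hab⟩

/-- **Finiteness of atomic fibers (Adams et al.).**  For a matrix `A ∈ ℕ^{d×n}` with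
nonzero columns, call `b ∈ ℕA` *atomic* if there are no nonzero `b₁, b₂ ∈ ℕA` with
`b₁ + b₂ = b` and `P_b = P_{b₁} + P_{b₂}` (Minkowski sum).  Then the set of atomic
elements of `ℕA` is finite. -/
theorem atomic_fibers_finite {d n : ℕ} (A : Matrix (Fin d) (Fin n) ℕ)
    (hcol : ∀ j : Fin n, ∃ i : Fin d, A i j ≠ 0) :
    { b : Fin d → ℕ | (∃ u : Fin n → ℕ, A.mulVec u = b) ∧
      ¬ ∃ b₁ b₂ : Fin d → ℕ, b₁ ≠ 0 ∧ b₂ ≠ 0 ∧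
        (∃ u₁ : Fin n → ℕ, A.mulVec u₁ = b₁) ∧
        (∃ u₂ : Fin n → ℕ, A.mulVec u₂ = b₂) ∧
        b₁ + b₂ = b ∧
        fiberPolytope A b = fiberPolytope A b₁ + fiberPolytope A b₂ }.Finite := by
  set S := { b : Fin d → ℕ | (∃ u : Fin n → ℕ, A.mulVec u = b) ∧
      ¬ ∃ b₁ b₂ : Fin d → ℕ, b₁ ≠ 0 ∧ b₂ ≠ 0 ∧
        (∃ u₁ : Fin n → ℕ, A.mulVec u₁ = b₁) ∧
        (∃ u₂ : Fin n → ℕ, A.mulVec u₂ = b₂) ∧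
        b₁ + b₂ = b ∧
        fiberPolytope A b = fiberPolytope A b₁ + fiberPolytope A b₂ } with hS
  by_contra hinf
  have hinf' : (S \ {0}).Infinite := Set.Infinite.sdiff hinf (Set.finite_singleton 0)
  let f := hinf'.natEmbedding
  obtain ⟨i, j, hij, hsub⟩ := lowerSet_wqo
    (fun k => {x : Fin n → ℕ | ¬ ∃ u, A.mulVec u = (f k : Fin d → ℕ) ∧ u ≤ x})
    (fun k x y hyx hx ⟨u, hu, huy⟩ => hx ⟨u, hu, huy.trans hyx⟩)
  have hne : (f i : Fin d → ℕ) ≠ f j := fun h =>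
    hij.ne (f.injective (Subtype.ext h))
  have hdom : ∀ v, A.mulVec v = (f j : Fin d → ℕ) →
      ∃ u, A.mulVec u = (f i : Fin d → ℕ) ∧ u ≤ v := by
    intro v hv
    by_contra h
    exact hsub h ⟨v, hv, le_rfl⟩
  obtain ⟨⟨hiS, -⟩, hi0⟩ := (f i).2
  obtain ⟨⟨⟨v, hv⟩, hat⟩, -⟩ := (f j).2
  obtain ⟨u, hu, huv⟩ := hdom v hv
  generalize (f i : Fin d → ℕ) = b₁ at *
  generalize (f j : Fin d → ℕ) = b at *
  have hadd : b₁ + A.mulVec (v - u) = b := by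
    rw [← hu, ← Matrix.mulVec_add, add_tsub_cancel_of_le huv, hv]
  apply hat
  refine ⟨b₁, A.mulVec (v - u), hi0, ?_, hiS, ⟨_, rfl⟩, hadd, ?_⟩
  · intro h0
    rw [h0, add_zero] at hadd
    exact hne hadd
  · unfold fiberPolytope
    rw [← convexHull_add]
    congr 1
    ext z
    constructor
    · rintro ⟨w, hw, rfl⟩
      obtain ⟨p, hp, hpw⟩ := hdom w hw
      refine Set.mem_add.mpr ⟨_, ⟨p, hp, rfl⟩, _, ⟨w - p, ?_, rfl⟩, ?_⟩
      · have h1 : b₁ + A.mulVec (w - p) = b₁ + A.mulVec (v - u) := by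
          rw [hadd, ← hp, ← Matrix.mulVec_add, add_tsub_cancel_of_le hpw, hw]
        exact add_left_cancel h1
      · ext k
        have h2 := congrFun (add_tsub_cancel_of_le hpw) k
        simp only [Pi.add_apply] at h2 ⊢
        exact_mod_cast h2
    · rintro ⟨_, ⟨p, hp, rfl⟩, _, ⟨q, hq, rfl⟩, rfl⟩
      refine ⟨p + q, ?_, ?_⟩
      · simp only [Set.mem_setOf_eq] at hp hq ⊢
        rw [Matrix.mulVec_add, hp, hq, hadd]
      · ext k
        simp
end

section
/- Let A be a d×n matrix with entries in ℕ, each of whose columns is nonzero, let π : ℕⁿ → ℕ^d be π(u) = Au with image ℕA, and let U ⊆ ℕⁿ be an upper set for the componentwise order (the set of exponents of a monomial ideal M). For b ∈ ℕA define the (M,A) fiber over b as F_b = { u ∈ ℕⁿ : Au = b and u ∉ U }. Call b atomic if there do not exist nonzero b₁, b₂ ∈ ℕA with b₁ + b₂ = b such that every u ∈ F_b can be written u = u₁ + u₂ with u₁ ∈ F_{b₁} and u₂ ∈ F_{b₂}. Then the set of atomic b ∈ ℕA is finite. -/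
/-- The `(M,A)` fiber over `b`: lattice points `u ∈ ℕⁿ` with `Au = b` whose
exponent is not in the upper set `U` (i.e. `x^u ∉ M`). -/
def MAFiber {d n : ℕ} (A : Matrix (Fin d) (Fin n) ℕ) (U : Set (Fin n → ℕ))
    (b : Fin d → ℕ) : Set (Fin n → ℕ) :=
  { u : Fin n → ℕ | A.mulVec u = b ∧ u ∉ U }

theorem boxes_of_finite {n : ℕ} (G : Set (Fin n → ℕ)) (hG : G.Finite) :
    ∃ L : List (Fin n → ℕ∞), ∀ u : Fin n → ℕ,
      (¬ ∃ g ∈ G, g ≤ u) ↔ ∃ c ∈ L, ∀ i, (u i : ℕ∞) ≤ c i := by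
  classical
  induction G, hG using Set.Finite.induction_on with
  | empty => exact ⟨[fun _ => ⊤], by simp⟩
  | @insert g G _ _ ih =>
    obtain ⟨L, hL⟩ := ih
    refine ⟨L.flatMap fun c => ((List.finRange n).filter fun i => 0 < g i).map fun i =>
      Function.update c i (min (c i) ((g i - 1 : ℕ) : ℕ∞)), fun u => ?_⟩
    have h1 : (¬ ∃ h ∈ insert g G, h ≤ u) ↔ (¬ ∃ h ∈ G, h ≤ u) ∧ ∃ i, u i < g i := by
      simp only [Set.mem_insert_iff, exists_eq_or_imp, not_or, Pi.le_def, not_forall, not_le]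
      tauto
    rw [h1, hL]
    simp only [List.mem_flatMap, List.mem_map, List.mem_filter, List.mem_finRange, true_and,
      decide_eq_true_eq]
    constructor
    · rintro ⟨⟨c, hc, hcu⟩, i, hi⟩
      refine ⟨_, ⟨c, hc, i, by omega, rfl⟩, fun k => ?_⟩
      by_cases hk : k = i
      · subst hk
        simp only [Function.update_self, le_min_iff]
        exact ⟨hcu k, by exact_mod_cast (by omega : u k ≤ g k - 1)⟩
      · simpa [Function.update_of_ne hk] using hcu k
    · rintro ⟨_, ⟨c, hc, i, hi, rfl⟩, hu⟩
      have hi' := hu i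
      simp only [Function.update_self, le_min_iff] at hi'
      refine ⟨⟨c, hc, fun k => ?_⟩, i, ?_⟩
      · by_cases hk : k = i
        · subst hk; exact hi'.1
        · simpa [Function.update_of_ne hk] using hu k
      · have : u i ≤ g i - 1 := by exact_mod_cast hi'.2
        omega

theorem boxes_of_upper {n : ℕ} (V : Set (Fin n → ℕ)) (hV : IsUpperSet V) :
    ∃ L : List (Fin n → ℕ∞), ∀ u : Fin n → ℕ,
      u ∉ V ↔ ∃ c ∈ L, ∀ i, (u i : ℕ∞) ≤ c i := by
  have hfin : {x | Minimal (· ∈ V) x}.Finite :=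
    (setOfPred_minimal_antichain (· ∈ V)).finite_of_partiallyWellOrderedOn (Set.isPWO_of_wellQuasiOrderedLE _)
  obtain ⟨L, hL⟩ := boxes_of_finite _ hfin
  refine ⟨L, fun u => ?_⟩
  rw [← hL, not_iff_not]
  constructor
  · intro hu
    obtain ⟨m, hm, hmin⟩ := exists_minimal_le_of_wellFoundedLT (· ∈ V) u hu
    exact ⟨m, hmin, hm⟩
  · rintro ⟨g, hg, hgu⟩
    exact hV hgu hg.prop

theorem upper_seq {n : ℕ} (V : ℕ → Set (Fin n → ℕ)) (hV : ∀ k, IsUpperSet (V k)) :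
    ∃ i j, i < j ∧ V j ⊆ V i := by
  choose L hL using fun k => boxes_of_upper (V k) (hV k)
  have hpwo := Set.PartiallyWellOrderedOn.partiallyWellOrderedOn_sublistForall₂ (· ≤ ·)
    (Set.isPWO_of_wellQuasiOrderedLE (Set.univ : Set (Fin n → ℕ∞)))
  obtain ⟨i, j, hij, h⟩ := hpwo (fun k => ⟨L k, by simp⟩)
  replace h : List.SublistForall₂ (· ≤ ·) (L i) (L j) := h
  refine ⟨i, j, hij, fun u hu => ?_⟩
  by_contra hui
  obtain ⟨c, hc, hcu⟩ := (hL i u).1 hui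
  obtain ⟨l, hl, hsub⟩ := List.sublistForall₂_iff.1 h
  obtain ⟨c', hc', hcc⟩ : ∃ c' ∈ l, c ≤ c' := by
    clear hsub h
    generalize L i = l₀ at hl hc
    induction hl with
    | nil => simp at hc
    | cons h1 _ ih =>
      rcases List.mem_cons.1 hc with rfl | hc
      · exact ⟨_, by simp, h1⟩
      · obtain ⟨c', h, h'⟩ := ih hc
        exact ⟨c', by simp [h], h'⟩
  exact (hL j u).2 ⟨c', hsub.subset hc', fun k => (hcu k).trans (hcc k)⟩ hu

/-- **Finiteness of atomic `(M,A)` fibers.**  Let `U ⊆ ℕⁿ` be an upper set (the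
exponent set of a monomial ideal `M`), and `A ∈ ℕ^{d×n}` a matrix with nonzero
columns.  Call `b ∈ ℕA` *atomic* if there are no nonzero `b₁, b₂ ∈ ℕA` with
`b₁ + b₂ = b` such that every `u` in the `(M,A)` fiber over `b` can be written as
`u₁ + u₂` with `u₁, u₂` in the `(M,A)` fibers over `b₁, b₂` respectively.
Then the set of atomic elements of `ℕA` is finite. -/
theorem atomic_MA_fibers_finite {d n : ℕ} (A : Matrix (Fin d) (Fin n) ℕ)
    (hcol : ∀ j : Fin n, ∃ i : Fin d, A i j ≠ 0)
    (U : Set (Fin n → ℕ)) (hU : IsUpperSet U) :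
    { b : Fin d → ℕ | (∃ u : Fin n → ℕ, A.mulVec u = b) ∧
      ¬ ∃ b₁ b₂ : Fin d → ℕ, b₁ ≠ 0 ∧ b₂ ≠ 0 ∧
        (∃ u₁ : Fin n → ℕ, A.mulVec u₁ = b₁) ∧
        (∃ u₂ : Fin n → ℕ, A.mulVec u₂ = b₂) ∧
        b₁ + b₂ = b ∧
        ∀ u ∈ MAFiber A U b, ∃ u₁ ∈ MAFiber A U b₁, ∃ u₂ ∈ MAFiber A U b₂,
          u = u₁ + u₂ }.Finite := by
  classical
  have hz : ∀ v : Fin n → ℕ, A.mulVec v = 0 → v = 0 := by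
    intro v hv
    funext j
    obtain ⟨i, hi⟩ := hcol j
    have h := congrFun hv i
    simp only [Matrix.mulVec, dotProduct, Pi.zero_apply, Finset.sum_eq_zero_iff,
      Finset.mem_univ, true_imp_iff, mul_eq_zero] at h
    exact (h j).resolve_left hi
  by_contra hinf
  have hinf : Set.Infinite _ := hinf
  have hE : (insert 0 (Set.range fun j => A.mulVec (Pi.single j 1))).Finite :=
    (Set.finite_range _).insert _
  have hinf2 := hinf.sdiff hE
  let f := hinf2.natEmbedding
  obtain ⟨i, j, hij, hsub⟩ := upper_seq
    (fun k => {u : Fin n → ℕ | ∃ v ∈ MAFiber A U (f k).1, v ≤ u})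
    (fun k a b hab ⟨v, hv, hva⟩ => ⟨v, hv, hva.trans hab⟩)
  have hne : (f i).1 ≠ (f j).1 := fun h => hij.ne (f.injective (Subtype.ext h))
  obtain ⟨⟨⟨w, hw⟩, hat⟩, hjE⟩ := (f j).2
  obtain ⟨⟨hiA, -⟩, hiE⟩ := (f i).2
  simp only [Set.mem_insert_iff, not_or, Set.mem_range, not_exists] at hjE hiE
  apply hat
  by_cases hemp : (MAFiber A U (f j).1).Nonempty
  · obtain ⟨u0, hu0⟩ := hemp
    obtain ⟨v0, hv0, hvu0⟩ := hsub ⟨u0, hu0, le_rfl⟩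
    obtain ⟨t0, rfl⟩ := exists_add_of_le hvu0
    have hsum : (f i).1 + A.mulVec t0 = (f j).1 := by
      rw [← hu0.1, ← hv0.1, Matrix.mulVec_add]
    refine ⟨(f i).1, A.mulVec t0, hiE.1, ?_, hiA, ⟨t0, rfl⟩, hsum, ?_⟩
    · intro h
      rw [h, add_zero] at hsum
      exact hne hsum
    · intro u hu
      obtain ⟨v, hv, hvu⟩ := hsub ⟨u, hu, le_rfl⟩
      obtain ⟨t, rfl⟩ := exists_add_of_le hvu
      refine ⟨v, hv, t, ⟨?_, fun ht => hu.2 (hU (by simp) ht)⟩, rfl⟩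
      have h2 : A.mulVec v + A.mulVec t = (f j).1 := by
        rw [← Matrix.mulVec_add]; exact hu.1
      rw [hv.1, ← hsum] at h2
      exact add_left_cancel h2
  · have hw0 : w ≠ 0 := by
      rintro rfl
      exact hjE.1 (by rw [← hw, Matrix.mulVec_zero])
    obtain ⟨k, hk⟩ := Function.ne_iff.1 hw0
    have hle : Pi.single k 1 ≤ w := by
      intro l
      by_cases hl : l = k
      · subst hl
        simpa using Nat.one_le_iff_ne_zero.2 hk
      · simp [Pi.single_eq_of_ne hl]
    obtain ⟨t, ht⟩ := exists_add_of_le hle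
    refine ⟨A.mulVec (Pi.single k 1), A.mulVec t, ?_, ?_, ⟨_, rfl⟩, ⟨_, rfl⟩, ?_, ?_⟩
    · intro h
      have := congrFun (hz _ h) k
      simp at this
    · intro h
      rw [hz _ h, add_zero] at ht
      exact hjE.2 k (by rw [← ht, hw])
    · rw [← Matrix.mulVec_add, ← ht, hw]
    · intro u hu
      exact absurd ⟨u, hu⟩ hemp
end

section
/- Let A be the 4×6 matrix over ℕ with rows (1,1,1,0,0,0), (0,3,2,1,0,0), (5,0,2,0,1,0), (0,2,1,0,0,1), let π : ℕ⁶ → ℕ⁴ be π(u) = Au, and let b₁ = (1,3,5,2)ᵀ, b₂ = (5,10,10,6)ᵀ. Then: (i) π⁻¹(b₁) = {(1,0,0,3,0,2), (0,1,0,0,5,0), (0,0,1,1,3,1)} and π⁻¹(b₂) = {(0,0,5,0,0,1), (1,2,2,0,1,0), (2,3,0,1,0,0)}; (ii) the convex hulls satisfy P_{b₁+b₂} = P_{b₁} + P_{b₂} (Minkowski sum in ℝ⁶); and (iii) the vector u = (1,1,4,2,2,2) satisfies Au = b₁ + b₂, but there do not exist u₁ ∈ π⁻¹(b₁) and u₂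 ∈ π⁻¹(b₂) with u = u₁ + u₂. -/
open Pointwise

/-- The matrix of the example. -/
def exA : Matrix (Fin 4) (Fin 6) ℕ :=
  !![1, 1, 1, 0, 0, 0;
     0, 3, 2, 1, 0, 0;
     5, 0, 2, 0, 1, 0;
     0, 2, 1, 0, 0, 1]

/-- The fiber polytope `P_b = conv(π⁻¹(b)) ⊆ ℝ⁶`. -/
def exP (b : Fin 4 → ℕ) : Set (Fin 6 → ℝ) :=
  convexHull ℝ ((fun u : Fin 6 → ℕ => fun i => (u i : ℝ)) ''
    { u : Fin 6 → ℕ | exA.mulVec u = b })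

theorem exA_iff (u : Fin 6 → ℕ) (a b c d : ℕ) : exA.mulVec u = ![a, b, c, d] ↔
    (u 0 + u 1 + u 2 = a ∧ 3 * u 1 + 2 * u 2 + u 3 = b ∧ 5 * u 0 + 2 * u 2 + u 4 = c ∧
      2 * u 1 + u 2 + u 5 = d) := by
  rw [funext_iff]
  simp [Fin.forall_fin_succ, exA, Matrix.mulVec, dotProduct, Fin.sum_univ_succ]
  have e3 : (Fin.succ 2 : Fin 6) = 3 := rfl
  constructor <;> rintro ⟨h1, h2, h3, h4⟩ <;> refine ⟨?_, ?_, ?_, ?_⟩ <;> omega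

theorem vec6_eq (u : Fin 6 → ℕ) (a b c d e f : ℕ) : u = ![a, b, c, d, e, f] ↔
    (u 0 = a ∧ u 1 = b ∧ u 2 = c ∧ u 3 = d ∧ u 4 = e ∧ u 5 = f) := by
  rw [funext_iff]
  simp [Fin.forall_fin_succ]

theorem fiber1 (u : Fin 6 → ℕ) : exA.mulVec u = ![1, 3, 5, 2] ↔
    (u = ![1, 0, 0, 3, 0, 2] ∨ u = ![0, 1, 0, 0, 5, 0] ∨ u = ![0, 0, 1, 1, 3, 1]) := by
  simp only [exA_iff, vec6_eq]
  constructor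
  · rintro ⟨h1, h2, h3, h4⟩
    have hx : u 0 ≤ 1 := by omega
    have hy : u 1 ≤ 1 := by omega
    generalize u 0 = x at *
    generalize u 1 = y at *
    interval_cases x <;> interval_cases y <;> simp <;> omega
  · rintro (h | h | h) <;> omega

theorem fiber2 (u : Fin 6 → ℕ) : exA.mulVec u = ![5, 10, 10, 6] ↔
    (u = ![0, 0, 5, 0, 0, 1] ∨ u = ![1, 2, 2, 0, 1, 0] ∨ u = ![2, 3, 0, 1, 0, 0]) := by
  simp only [exA_iff, vec6_eq]
  constructor
  · rintro ⟨h1, h2, h3, h4⟩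
    have hx : u 0 ≤ 2 := by omega
    have hy : u 1 ≤ 3 := by omega
    generalize u 0 = x at *
    generalize u 1 = y at *
    interval_cases x <;> interval_cases y <;> simp <;> omega
  · rintro (h | h | h) <;> omega

theorem bsum : (![1, 3, 5, 2] + ![5, 10, 10, 6] : Fin 4 → ℕ) = ![6, 13, 15, 8] := by
  decide

/-- Every point of the big fiber but one is a sum of points of the small fibers. -/
theorem fiber3 (u : Fin 6 → ℕ) (h : exA.mulVec u = ![6, 13, 15, 8]) :
    u = ![1, 1, 4, 2, 2, 2] ∨ ∃ v w : Fin 6 → ℕ, exA.mulVec v = ![1, 3, 5, 2] ∧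
      exA.mulVec w = ![5, 10, 10, 6] ∧ u = v + w := by
  have key : u = ![1, 1, 4, 2, 2, 2] ∨
      u = ![1, 0, 0, 3, 0, 2] + ![0, 0, 5, 0, 0, 1] ∨
      u = ![1, 0, 0, 3, 0, 2] + ![1, 2, 2, 0, 1, 0] ∨
      u = ![1, 0, 0, 3, 0, 2] + ![2, 3, 0, 1, 0, 0] ∨
      u = ![0, 1, 0, 0, 5, 0] + ![0, 0, 5, 0, 0, 1] ∨
      u = ![0, 1, 0, 0, 5, 0] + ![1, 2, 2, 0, 1, 0] ∨
      u = ![0, 1, 0, 0, 5, 0] + ![2, 3, 0, 1, 0, 0] ∨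
      u = ![0, 0, 1, 1, 3, 1] + ![0, 0, 5, 0, 0, 1] ∨
      u = ![0, 0, 1, 1, 3, 1] + ![1, 2, 2, 0, 1, 0] ∨
      u = ![0, 0, 1, 1, 3, 1] + ![2, 3, 0, 1, 0, 0] := by
    rw [exA_iff] at h
    simp only [Matrix.cons_add_cons, Matrix.empty_add_empty, vec6_eq]
    obtain ⟨h1, h2, h3, h4⟩ := h
    have hx : u 0 ≤ 3 := by omega
    have hy : u 1 ≤ 4 := by omega
    generalize u 0 = x at *
    generalize u 1 = y at *
    interval_cases x <;> interval_cases y <;> simp <;> omega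
  rcases key with h | h | h | h | h | h | h | h | h | h
  · exact Or.inl h
  all_goals exact Or.inr ⟨_, _, (fiber1 _).2 (by simp), (fiber2 _).2 (by simp), h⟩

theorem exP_add : exP (![1, 3, 5, 2] + ![5, 10, 10, 6]) =
    exP ![1, 3, 5, 2] + exP ![5, 10, 10, 6] := by
  rw [bsum]
  unfold exP
  rw [← convexHull_add]
  have good : ∀ v w : Fin 6 → ℕ, exA.mulVec v = ![1, 3, 5, 2] →
      exA.mulVec w = ![5, 10, 10, 6] → (fun i => ((v + w) i : ℝ)) ∈
      ((fun u : Fin 6 → ℕ => fun i => (u i : ℝ)) '' {u | exA.mulVec u = ![1, 3, 5, 2]}) +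
      ((fun u : Fin 6 → ℕ => fun i => (u i : ℝ)) '' {u | exA.mulVec u = ![5, 10, 10, 6]}) := by
    intro v w hv hw
    refine Set.mem_add.2 ⟨_, ⟨v, hv, rfl⟩, _, ⟨w, hw, rfl⟩, ?_⟩
    funext i
    simp
  apply Set.Subset.antisymm
  · apply convexHull_min _ (convex_convexHull ℝ _)
    rintro _ ⟨u, hu, rfl⟩
    rcases fiber3 u hu with h | ⟨v, w, hv, hw, h⟩
    · have h1 := subset_convexHull ℝ _ (good ![1, 0, 0, 3, 0, 2] ![0, 0, 5, 0, 0, 1]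
        ((fiber1 _).2 (by simp)) ((fiber2 _).2 (by simp)))
      have h2 := subset_convexHull ℝ _ (good ![0, 0, 1, 1, 3, 1] ![1, 2, 2, 0, 1, 0]
        ((fiber1 _).2 (by simp)) ((fiber2 _).2 (by simp)))
      have h3 := convex_convexHull ℝ _ h1 h2 (a := 1 / 2) (b := 1 / 2)
        (by norm_num) (by norm_num) (by norm_num)
      convert h3 using 1
      subst h
      funext i
      fin_cases i <;> simp <;> norm_num
    · subst h
      exact subset_convexHull ℝ _ (good v w hv hw)
  · apply convexHull_mono
    rintro _ ⟨_, ⟨v, hv, rfl⟩, _, ⟨w, hw, rfl⟩, rfl⟩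
    refine ⟨v + w, ?_, ?_⟩
    · change exA.mulVec (v + w) = _
      rw [Matrix.mulVec_add, hv, hw, bsum]
    · funext i
      simp

/-- **A fiber atomic in the strong sense but not in the original sense.**
With `b₁ = (1,3,5,2)ᵀ` and `b₂ = (5,10,10,6)ᵀ`: (i) the fibers `π⁻¹(b₁)` and
`π⁻¹(b₂)` are the stated three-element sets; (ii) `P_{b₁+b₂} = P_{b₁} + P_{b₂}`
as a Minkowski sum; (iii) `u = (1,1,4,2,2,2)` satisfies `Au = b₁ + b₂` but is not
a sum of a lattice point of `π⁻¹(b₁)` and a lattice point of `π⁻¹(b₂)`. -/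
theorem oda_type_example :
    ({ u : Fin 6 → ℕ | exA.mulVec u = ![1, 3, 5, 2] } =
      {![1, 0, 0, 3, 0, 2], ![0, 1, 0, 0, 5, 0], ![0, 0, 1, 1, 3, 1]}) ∧
    ({ u : Fin 6 → ℕ | exA.mulVec u = ![5, 10, 10, 6] } =
      {![0, 0, 5, 0, 0, 1], ![1, 2, 2, 0, 1, 0], ![2, 3, 0, 1, 0, 0]}) ∧
    (exP (![1, 3, 5, 2] + ![5, 10, 10, 6]) =
      exP ![1, 3, 5, 2] + exP ![5, 10, 10, 6]) ∧
    (exA.mulVec ![1, 1, 4, 2, 2, 2] = ![1, 3, 5, 2] + ![5, 10, 10, 6]) ∧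
    ¬ ∃ u₁ u₂ : Fin 6 → ℕ, exA.mulVec u₁ = ![1, 3, 5, 2] ∧
        exA.mulVec u₂ = ![5, 10, 10, 6] ∧ ![1, 1, 4, 2, 2, 2] = u₁ + u₂ := by
  refine ⟨?_, ?_, exP_add, ?_, ?_⟩
  · ext u
    simpa using fiber1 u
  · ext u
    simpa using fiber2 u
  · rw [bsum, exA_iff]
    simp
  · rintro ⟨v, w, hv, hw, h⟩
    have h' : v + w = ![1, 1, 4, 2, 2, 2] := h.symm
    rw [exA_iff] at hv hw
    rw [vec6_eq] at h'
    simp only [Pi.add_apply] at h'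
    omega
end

section
/- Let X = { (i,j) : i, j ∈ ℕ, i < j } with the partial order (i,j) ≺ (i′,j′) iff j < j′ and either i = i′ or j < i′. Then every antichain in X is finite; moreover, if Y is an antichain and j₀ is the smallest second coordinate occurring among elements of Y, then Y has at most j₀ + 1 elements. -/
/-- The set `X = { (i,j) : i,j ∈ ℕ, i < j }`. -/
def BergmanX : Type := { p : ℕ × ℕ // p.1 < p.2 }

/-- The relation `(i,j) ≺ (i',j')` iff `j < j'` and (`i = i'` or `j < i'`). -/
def BergmanPrec (x y : BergmanX) : Prop :=
  x.1.2 < y.1.2 ∧ (x.1.1 = y.1.1 ∨ x.1.2 < y.1.1)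

/-- **All antichains in `X` are finite.**  Every antichain `Y` of `(X, ≺)` is
finite; moreover, if `j₀` is the smallest second coordinate occurring among the
elements of `Y`, then `Y` has at most `j₀ + 1` elements. -/
theorem bergmanX_antichains_finite (Y : Set BergmanX)
    (hY : IsAntichain BergmanPrec Y) :
    Y.Finite ∧ ∀ j₀ : ℕ, (∃ x ∈ Y, x.1.2 = j₀) → (∀ y ∈ Y, j₀ ≤ y.1.2) →
      Y.ncard ≤ j₀ + 1 := by
  have inj : Set.InjOn (fun x : BergmanX => x.1.1) Y := by
    intro a ha b hb hab
    simp only at hab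
    by_contra hne
    have h1 := hY ha hb hne
    have h2 := hY hb ha (Ne.symm hne)
    simp only [Pi.compl_apply, compl_iff_not, BergmanPrec] at h1 h2
    apply hne
    apply Subtype.ext
    apply Prod.ext hab
    by_contra h3
    rcases Nat.lt_or_gt_of_ne h3 with h | h
    · exact h1 ⟨h, Or.inl hab⟩
    · exact h2 ⟨h, Or.inl hab.symm⟩
  have key : ∀ x ∈ Y, Set.MapsTo (fun x : BergmanX => x.1.1) Y
      (Finset.range (x.1.2 + 1) : Set ℕ) := by
    intro x hx y hy
    simp only [Finset.coe_range, Set.mem_Iio]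
    by_contra h
    have hy2 : y.1.1 < y.1.2 := y.2
    have hne : x ≠ y := by
      rintro rfl
      omega
    exact hY hx hy hne ⟨by omega, Or.inr (by omega)⟩
  constructor
  · rcases Y.eq_empty_or_nonempty with rfl | ⟨x, hx⟩
    · exact Set.finite_empty
    · exact Set.Finite.of_injOn (key x hx) inj (Finset.finite_toSet _)
  · rintro j₀ ⟨x, hx, rfl⟩ _
    have h := Set.ncard_le_ncard_of_injOn _ (key x hx) inj (Finset.finite_toSet _)
    rwa [Set.ncard_coe_finset, Finset.card_range] at h
end

section
/- Let X = { (i,j) : i, j ∈ ℕ, i < j } with the partial order (i,j) ≺ (i′,j′) iff j < j′ and either i = i′ or j < i′. For each integer l > 0 let S_l = { (k,l) : k < l } ⊆ X, and let U_l be the dual order ideal of X generated by S_l (the set of elements of X that are ≥ some element of S_l). Then the sets U_l, for l > 0, are pairwise distinct and pairwise incomparable under inclusion; hence the poset of dual order ideals of X contains an infinite antichain, even though X itself has no infinite antichains and no infinite descending chains. -/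
/-- The associated (non-strict) partial order `x ⪯ y` iff `x = y` or `x ≺ y`. -/
def BergmanLe (x y : BergmanX) : Prop :=
  x = y ∨ BergmanPrec x y

/-- A dual order ideal (upper set) of `X`. -/
def BergmanUpperSet (U : Set BergmanX) : Prop :=
  ∀ x ∈ U, ∀ y : BergmanX, BergmanLe x y → y ∈ U

/-- `U_l`: the dual order ideal of `X` generated by `S_l = { (k,l) : k < l }`. -/
def BergmanU (l : ℕ) : Set BergmanX :=
  { y : BergmanX | ∃ k : ℕ, ∃ h : k < l, BergmanLe ⟨(k, l), h⟩ y }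

theorem bergmanPrec_trans {x y z : BergmanX} (h : BergmanPrec x y) (h' : BergmanPrec y z) :
    BergmanPrec x z := by
  unfold BergmanPrec at *
  omega

theorem bergmanU_upper (l : ℕ) : BergmanUpperSet (BergmanU l) := by
  rintro x ⟨k, hk, hx⟩ y hxy
  refine ⟨k, hk, ?_⟩
  rcases hx with rfl | hx
  · exact hxy
  · rcases hxy with rfl | hxy
    · exact Or.inr hx
    · exact Or.inr (bergmanPrec_trans hx hxy)

theorem bergmanU_not_subset (a b : ℕ) (ha : 0 < a) (hab : a ≠ b) :
    ¬ BergmanU a ⊆ BergmanU b := by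
  intro hsub
  rcases Nat.lt_or_gt_of_ne hab with h | h
  · obtain ⟨k, hk, he | he⟩ := hsub (show (⟨(0, a), ha⟩ : BergmanX) ∈ BergmanU a from
      ⟨0, ha, Or.inl rfl⟩)
    · have := congrArg (fun x : BergmanX => x.1.2) he
      simp only at this
      omega
    · simp only [BergmanPrec] at he
      omega
  · obtain ⟨k, hk, he | he⟩ := hsub (show (⟨(b, a), h⟩ : BergmanX) ∈ BergmanU a from
      ⟨b, h, Or.inl rfl⟩)
    · have := congrArg (fun x : BergmanX => x.1.2) he
      simp only at this
      omega
    · simp only [BergmanPrec] at he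
      omega

theorem bergman_antichain_finite (Y : Set BergmanX) (hY : IsAntichain BergmanPrec Y) :
    Y.Finite := by
  rcases Y.eq_empty_or_nonempty with rfl | ⟨x, hx⟩
  · exact Set.finite_empty
  apply Set.Finite.of_finite_image (f := fun y : BergmanX => y.1.1)
  · apply (Set.finite_Iic x.1.2).subset
    rintro _ ⟨y, hy, rfl⟩
    by_contra hlt
    simp only [Set.mem_Iic, not_le] at hlt
    have h1 := x.2
    have h2 := y.2
    have hne : x ≠ y := by
      rintro rfl
      omega
    exact hY hx hy hne ⟨by omega, Or.inr hlt⟩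
  · intro y hy z hz hyz
    simp only at hyz
    by_contra hne
    rcases lt_trichotomy y.1.2 z.1.2 with h | h | h
    · exact hY hy hz hne ⟨h, Or.inl hyz⟩
    · exact hne (Subtype.ext (Prod.ext hyz h))
    · exact hY hz hy (Ne.symm hne) ⟨h, Or.inl hyz.symm⟩

/-- **An infinite antichain of dual order ideals of `X`.**  The dual order ideals
`U_l` (for `l > 0`) generated by the antichains `S_l = { (k,l) : k < l }` are
pairwise distinct and pairwise incomparable under inclusion; hence the poset of
dual order ideals of `X`, ordered by inclusion, contains an infinite antichain,
even though `X` itself has no infinite antichains and no infinite strictly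
descending chains. -/
theorem bergmanX_dual_order_ideals_infinite_antichain :
    (∀ l : ℕ, BergmanUpperSet (BergmanU l)) ∧
    (∀ l₁ l₂ : ℕ, 0 < l₁ → 0 < l₂ → l₁ ≠ l₂ →
      BergmanU l₁ ≠ BergmanU l₂ ∧ ¬ BergmanU l₁ ⊆ BergmanU l₂) ∧
    (∃ 𝒜 : Set (Set BergmanX), (∀ U ∈ 𝒜, BergmanUpperSet U) ∧
      𝒜.Infinite ∧ IsAntichain (· ⊆ ·) 𝒜) ∧
    (∀ Y : Set BergmanX, IsAntichain BergmanPrec Y → Y.Finite) ∧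
    (¬ ∃ f : ℕ → BergmanX, ∀ m : ℕ, BergmanPrec (f (m + 1)) (f m)) := by
  refine ⟨bergmanU_upper, ?_, ?_, bergman_antichain_finite, ?_⟩
  · intro a b ha _ hab
    have h := bergmanU_not_subset a b ha hab
    exact ⟨fun e => h e.subset, h⟩
  · refine ⟨Set.range fun n : ℕ => BergmanU (n + 1), ?_, ?_, ?_⟩
    · rintro _ ⟨n, rfl⟩
      exact bergmanU_upper _
    · apply Set.infinite_range_of_injective
      intro m n hmn
      by_contra hne
      exact bergmanU_not_subset (m + 1) (n + 1) (by omega) (by omega) (Eq.subset hmn)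
    · rintro _ ⟨m, rfl⟩ _ ⟨n, rfl⟩ hne hsub
      refine bergmanU_not_subset (m + 1) (n + 1) (by omega) ?_ hsub
      intro e
      exact hne (congrArg BergmanU e)
  · rintro ⟨f, hf⟩
    have key : ∀ m, (f m).1.2 + m ≤ (f 0).1.2 := by
      intro m
      induction m with
      | zero => simp
      | succ m ih =>
        have := (hf m).1
        omega
    have := key ((f 0).1.2 + 1)
    omega
end

section
/- Let P and Q be partially ordered sets, each having no infinite antichains and satisfying the descending chain condition (no infinite strictly descending chains). If the poset of dual order ideals of P, ordered by inclusion, and the poset of dual order ideals of Q, ordered by inclusion, each have no infinite antichains, then the poset of dual order ideals of the product poset P × Q (with componentwise order), ordered by inclusion, also has no infinite antichains. -/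
open Filter in
lemma fs_homog (c : ℕ → ℕ → ℕ → Prop)
    (h : ∀ᶠ i in (hyperfilter ℕ : Filter ℕ), ∀ᶠ j in (hyperfilter ℕ : Filter ℕ),
      ∀ᶠ k in (hyperfilter ℕ : Filter ℕ), c i j k) :
    ∃ g : ℕ → ℕ, StrictMono g ∧ ∀ a b d, a < b → b < d → c (g a) (g b) (g d) := by
  let Good : Finset ℕ → Prop := fun H =>
    (∀ i ∈ H, ∀ᶠ j in (hyperfilter ℕ : Filter ℕ), ∀ᶠ k in (hyperfilter ℕ : Filter ℕ), c i j k) ∧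
    (∀ i ∈ H, ∀ j ∈ H, i < j → ∀ᶠ k in (hyperfilter ℕ : Filter ℕ), c i j k) ∧
    (∀ i ∈ H, ∀ j ∈ H, ∀ k ∈ H, i < j → j < k → c i j k)
  have hgt : ∀ i : ℕ, ∀ᶠ j in (hyperfilter ℕ : Filter ℕ), i < j := fun i =>
    Nat.hyperfilter_le_atTop (eventually_gt_atTop i)
  have step : ∀ H : {H : Finset ℕ // Good H}, ∃ y, (∀ i ∈ H.1, i < y) ∧ Good (insert y H.1) := by
    rintro ⟨H, h1, h2, h3⟩
    have e1 := (eventually_all_finset H).2 fun i _ => hgt i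
    have e2 := (eventually_all_finset H).2 h1
    have e3 : ∀ᶠ k in (hyperfilter ℕ : Filter ℕ), ∀ i ∈ H, ∀ j ∈ H, i < j → c i j k := by
      refine (eventually_all_finset H).2 fun i hi => (eventually_all_finset H).2 fun j hj => ?_
      by_cases hij : i < j
      · exact (h2 i hi j hj hij).mono fun _ hk _ => hk
      · exact Eventually.of_forall fun _ h' => absurd h' hij
    obtain ⟨y, ⟨⟨y0, y1⟩, y2⟩, y3⟩ := (((h.and e1).and e2).and e3).exists
    refine ⟨y, y1, ?_, ?_, ?_⟩
    · intro i hi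
      rcases Finset.mem_insert.1 hi with rfl | hi
      · exact y0
      · exact h1 i hi
    · intro i hi j hj hij
      rcases Finset.mem_insert.1 hi with rfl | hi' <;> rcases Finset.mem_insert.1 hj with rfl | hj'
      · exact absurd hij (lt_irrefl _)
      · exact absurd hij (y1 j hj').not_gt
      · exact y2 i hi'
      · exact h2 i hi' j hj' hij
    · intro i hi j hj k hk hij hjk
      have hle : ∀ x ∈ insert y H, x ≤ y := by
        intro x hx
        rcases Finset.mem_insert.1 hx with rfl | hx
        · exact le_rfl
        · exact (y1 x hx).le
      have hjH : j ∈ H := Finset.mem_of_mem_insert_of_ne hj (by have := hle k hk; omega)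
      have hiH : i ∈ H := Finset.mem_of_mem_insert_of_ne hi (by have := hle k hk; omega)
      rcases Finset.mem_insert.1 hk with rfl | hk
      · exact y3 i hiH j hjH hij
      · exact h3 i hiH j hjH k hk hij hjk
  choose y hy hG using step
  let G : ℕ → {H : Finset ℕ // Good H} := fun n =>
    Nat.rec ⟨∅, by simp [Good]⟩ (fun _ H => ⟨insert (y H) H.1, hG H⟩) n
  have hsucc : ∀ n, (G (n + 1)).1 = insert (y (G n)) (G n).1 := fun _ => rfl
  have hmono : Monotone fun n => (G n).1 := monotone_nat_of_le_succ fun n => by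
    rw [hsucc]; exact Finset.subset_insert _ _
  have hmem : ∀ a b, a < b → y (G a) ∈ (G b).1 := fun a b hab =>
    hmono (Nat.succ_le_of_lt hab) (by
      show y (G a) ∈ (G (a + 1)).1
      rw [hsucc]; exact Finset.mem_insert_self _ _)
  have hlt : ∀ a b, a < b → y (G a) < y (G b) := fun a b hab => hy _ _ (hmem a b hab)
  refine ⟨fun n => y (G n), fun a b hab => hlt a b hab, fun a b d hab hbd => ?_⟩
  exact (G (d + 1)).2.2.2 _ (hmem a (d + 1) (by omega)) _ (hmem b (d + 1) (by omega)) _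
    (hmem d (d + 1) (by omega)) (hlt a b hab) (hlt b d hbd)

/-- No bad array indexed by pairs when the upper sets are well quasi ordered. -/
lemma fs_no_bad {P : Type*} [Preorder P] [WellQuasiOrderedLE (UpperSet P)] (f : ℕ → ℕ → P)
    (g : ℕ → ℕ) (hg : ∀ a b d, a < b → b < d → ¬ f (g a) (g b) ≤ f (g b) (g d)) : False := by
  obtain ⟨b, d, hbd, hle⟩ := wellQuasiOrdered_le (α := UpperSet P)
    (fun b => upperClosure {x | ∃ a < b, x = f (g a) (g b)})
  have h1 : f (g b) (g d) ∈ upperClosure {x | ∃ a < d, x = f (g a) (g d)} :=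
    subset_upperClosure ⟨b, hbd, rfl⟩
  obtain ⟨x, ⟨a, hab, rfl⟩, hx⟩ := mem_upperClosure.1 (hle h1)
  exact hg a b d hab hbd hx

open Filter in
lemma fs_prod {P Q : Type*} [Preorder P] [Preorder Q] [WellQuasiOrderedLE (UpperSet P)]
    [WellQuasiOrderedLE (UpperSet Q)] : WellQuasiOrderedLE (UpperSet (P × Q)) := by
  refine ⟨fun W => ?_⟩
  by_contra! hW
  have hx : ∀ i j, ∃ x : P × Q, i < j → x ∈ W j ∧ x ∉ W i := by
    intro i j
    by_cases hij : i < j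
    · obtain ⟨x, hx1, hx2⟩ := Set.not_subset.1 (hW i j hij)
      exact ⟨x, fun _ => ⟨hx1, hx2⟩⟩
    · have := hW 0 1 one_pos
      obtain ⟨x, -, -⟩ := Set.not_subset.1 this
      exact ⟨x, fun h => absurd h hij⟩
  choose f hf using hx
  have hbad : ∀ i j k, i < j → j < k → (¬ (f i j).1 ≤ (f j k).1) ∨ ¬ (f i j).2 ≤ (f j k).2 := by
    intro i j k hij hjk
    rw [← not_and_or]
    exact fun h => (hf j k hjk).2 ((W j).upper h (hf i j hij).1)
  have hgt : ∀ i : ℕ, ∀ᶠ j in (hyperfilter ℕ : Filter ℕ), i < j := fun i =>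
    Nat.hyperfilter_le_atTop (eventually_gt_atTop i)
  have key : ∀ᶠ i in (hyperfilter ℕ : Filter ℕ), ∀ᶠ j in (hyperfilter ℕ : Filter ℕ),
      ∀ᶠ k in (hyperfilter ℕ : Filter ℕ),
      (¬ (f i j).1 ≤ (f j k).1) ∨ ¬ (f i j).2 ≤ (f j k).2 :=
    Eventually.of_forall fun i => (hgt i).mono fun j hij => (hgt j).mono fun k hjk =>
      hbad i j k hij hjk
  simp only [Ultrafilter.eventually_or] at key
  rcases key with h | h
  · obtain ⟨g, -, hg⟩ := fs_homog _ h
    exact fs_no_bad (fun i j => (f i j).1) g hg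
  · obtain ⟨g, -, hg⟩ := fs_homog _ h
    exact fs_no_bad (fun i j => (f i j).2) g hg

lemma fs_wqo {P : Type*} [PartialOrder P]
    (hPac : ∀ A : Set P, IsAntichain (· ≤ ·) A → A.Finite)
    (hPdcc : ¬ ∃ f : ℕ → P, ∀ m : ℕ, f (m + 1) < f m)
    (hPup : ∀ 𝒜 : Set (Set P), (∀ U ∈ 𝒜, IsUpperSet U) →
      IsAntichain (· ⊆ ·) 𝒜 → 𝒜.Finite) : WellQuasiOrderedLE (UpperSet P) := by
  have hwf : WellFoundedLT P := by
    refine ⟨wellFounded_iff_isEmpty_descending_chain.2 ⟨fun f => hPdcc ⟨f.1, f.2⟩⟩⟩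
  have hP : WellQuasiOrderedLE P := wellQuasiOrderedLE_iff.2 ⟨hwf, fun s hs => hPac s hs⟩
  refine wellQuasiOrderedLE_iff.2 ⟨?_, fun s hs => ?_⟩
  · refine ⟨wellFounded_iff_isEmpty_descending_chain.2 ⟨?_⟩⟩
    rintro ⟨U, hU⟩
    have hx : ∀ n, ∃ x, x ∈ U (n + 1) ∧ x ∉ U n := fun n => Set.not_subset.1 (hU n).not_ge
    choose x hx1 hx2 using hx
    obtain ⟨m, n, hmn, hle⟩ := wellQuasiOrdered_le x
    have hanti : Antitone U := antitone_nat_of_succ_le fun n => (hU n).le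
    exact hx2 n (hanti (Nat.succ_le_of_lt hmn) ((U (m + 1)).upper hle (hx1 m)))
  · refine Set.Finite.of_finite_image (f := fun U : UpperSet P => (U : Set P))
      (hPup _ ?_ ?_) SetLike.coe_injective.injOn
    · rintro _ ⟨U, -, rfl⟩
      exact U.upper
    · rintro _ ⟨U, hU, rfl⟩ _ ⟨V, hV, rfl⟩ hne hsub
      exact hs hV hU (fun h => hne (by rw [h])) hsub

/-- **Farley–Schmidt theorem.**  Let `P` and `Q` be posets with no infinite
antichains satisfying the descending chain condition.  If the posets of dual
order ideals (upper sets) of `P` and of `Q`, ordered by inclusion, have no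
infinite antichains, then the same is true for the poset of dual order ideals of
the product poset `P × Q`. -/
theorem farley_schmidt {P Q : Type*} [PartialOrder P] [PartialOrder Q]
    (hPac : ∀ A : Set P, IsAntichain (· ≤ ·) A → A.Finite)
    (hQac : ∀ A : Set Q, IsAntichain (· ≤ ·) A → A.Finite)
    (hPdcc : ¬ ∃ f : ℕ → P, ∀ m : ℕ, f (m + 1) < f m)
    (hQdcc : ¬ ∃ f : ℕ → Q, ∀ m : ℕ, f (m + 1) < f m)
    (hPup : ∀ 𝒜 : Set (Set P), (∀ U ∈ 𝒜, IsUpperSet U) →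
      IsAntichain (· ⊆ ·) 𝒜 → 𝒜.Finite)
    (hQup : ∀ 𝒜 : Set (Set Q), (∀ U ∈ 𝒜, IsUpperSet U) →
      IsAntichain (· ⊆ ·) 𝒜 → 𝒜.Finite) :
    ∀ 𝒜 : Set (Set (P × Q)), (∀ U ∈ 𝒜, IsUpperSet U) →
      IsAntichain (· ⊆ ·) 𝒜 → 𝒜.Finite := by
  intro 𝒜 h𝒜 hanti
  have := fs_wqo hPac hPdcc hPup
  have := fs_wqo hQac hQdcc hQup
  have := fs_prod (P := P) (Q := Q)
  have hfin : {U : UpperSet (P × Q) | (U : Set (P × Q)) ∈ 𝒜}.Finite := by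
    refine WellQuasiOrderedLE.finite_of_isAntichain ?_
    intro U hU V hV hne hle
    exact hanti hV hU (fun h => hne (SetLike.coe_injective h.symm)) hle
  refine (hfin.image fun U : UpperSet (P × Q) => (U : Set (P × Q))).subset ?_
  intro U hU
  exact ⟨⟨U, h𝒜 U hU⟩, hU, rfl⟩
end

section
/- Let k be a field and S = k[x₁,…,xₙ]. If 𝓘 is an infinite collection of artinian monomial ideals of S (monomial ideals I such that S/I is a finite-dimensional k-vector space, equivalently I contains a power of each variable), then there are two distinct ideals I, J ∈ 𝓘 with I ⊆ J. -/
theorem aux_mem_of_le {k : Type*} [Field k] {n : ℕ}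
    {I : Ideal (MvPolynomial (Fin n) k)} {u v : Fin n →₀ ℕ} (h : u ≤ v)
    (hu : MvPolynomial.monomial u (1 : k) ∈ I) : MvPolynomial.monomial v (1 : k) ∈ I := by
  refine I.mem_of_dvd ?_ hu
  rw [MvPolynomial.monomial_dvd_monomial]
  exact ⟨Or.inr h, dvd_rfl⟩

theorem aux_finite {k : Type*} [Field k] {n : ℕ}
    {I : Ideal (MvPolynomial (Fin n) k)} (hI : IsMonomialIdeal I)
    (hf : Module.Finite k (MvPolynomial (Fin n) k ⧸ I)) :
    {u : Fin n →₀ ℕ | MvPolynomial.monomial u (1 : k) ∉ I}.Finite := by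
  classical
  have hli : LinearIndependent k
      (fun u : {u : Fin n →₀ ℕ | MvPolynomial.monomial u (1 : k) ∉ I} =>
        Ideal.Quotient.mkₐ k I (MvPolynomial.monomial (u : Fin n →₀ ℕ) (1 : k))) := by
    rw [linearIndependent_iff']
    intro s g hg i hi
    by_contra hne
    simp_rw [← map_smul] at hg
    rw [← map_sum, Ideal.Quotient.mkₐ_eq_mk, Ideal.Quotient.eq_zero_iff_mem] at hg
    obtain ⟨U, hU⟩ := hI
    have hg' := MvPolynomial.mem_ideal_span_monomial_image.1 (hU.le hg)
    obtain ⟨v, hv, hle⟩ := hg' i.1 (by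
      rw [MvPolynomial.mem_support_iff, MvPolynomial.coeff_sum, Finset.sum_eq_single i]
      · simpa using hne
      · intro b _ hb
        have : (b : Fin n →₀ ℕ) ≠ i := fun h => hb (Subtype.ext h)
        simp [MvPolynomial.coeff_monomial, this]
      · intro h
        exact absurd hi h)
    refine i.2 (aux_mem_of_le hle ?_)
    exact hU.ge (Ideal.subset_span ⟨v, hv, rfl⟩)
  have := hli.finite
  exact Set.toFinite _

theorem aux_sublist {α : Type*} {r : α → α → Prop} {l m : List α}
    (h : List.SublistForall₂ r l m) : ∀ a ∈ l, ∃ b ∈ m, r a b := by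
  induction h with
  | nil => simp
  | cons hr _ ih =>
    intro a ha
    rcases List.mem_cons.1 ha with rfl | ha
    · exact ⟨_, by simp, hr⟩
    · obtain ⟨b, hb, hab⟩ := ih a ha
      exact ⟨b, List.mem_cons_of_mem _ hb, hab⟩
  | cons_right _ ih =>
    intro a ha
    obtain ⟨b, hb, hab⟩ := ih a ha
    exact ⟨b, List.mem_cons_of_mem _ hb, hab⟩

/-- **Antichains of artinian monomial ideals are finite.**  If `𝓘` is an infinite
collection of artinian monomial ideals of `k[x₁,…,xₙ]` (monomial ideals `I` with
`S/I` finite-dimensional over `k`), then there are two distinct ideals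
`I, J ∈ 𝓘` with `I ⊆ J`. -/
theorem artinian_monomialIdeals_no_infinite_antichain {k : Type*} [Field k]
    {n : ℕ} (𝓘 : Set (Ideal (MvPolynomial (Fin n) k)))
    (hmono : ∀ I ∈ 𝓘, IsMonomialIdeal I)
    (hart : ∀ I ∈ 𝓘, Module.Finite k (MvPolynomial (Fin n) k ⧸ I))
    (hinf : 𝓘.Infinite) :
    ∃ I ∈ 𝓘, ∃ J ∈ 𝓘, I ≠ J ∧ I ≤ J := by
  classical
  have hfin : ∀ I : 𝓘, {u : Fin n →₀ ℕ | MvPolynomial.monomial u (1 : k) ∉ I.1}.Finite :=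
    fun I => aux_finite (hmono I.1 I.2) (hart I.1 I.2)
  let f : ℕ ↪ 𝓘 := hinf.natEmbedding
  have hw : (Set.univ : Set (Fin n →₀ ℕ)).PartiallyWellOrderedOn (· ≤ ·) :=
    Set.partiallyWellOrderedOn_univ_iff.2 wellQuasiOrdered_le
  obtain ⟨a, b, hab, h⟩ :=
    (Set.PartiallyWellOrderedOn.partiallyWellOrderedOn_sublistForall₂ _ hw).exists_lt
      (f := fun m => (hfin (f m)).toFinset.toList) (fun m x _ => Set.mem_univ x)
  refine ⟨(f b).1, (f b).2, (f a).1, (f a).2, ?_, ?_⟩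
  · intro he
    exact hab.ne' (f.injective (Subtype.ext he))
  · obtain ⟨U, hU⟩ := hmono (f b).1 (f b).2
    rw [hU, Ideal.span_le]
    rintro _ ⟨u, hu, rfl⟩
    by_contra hna
    obtain ⟨v, hv, huv⟩ := aux_sublist h u (by simpa using hna)
    have hv' : MvPolynomial.monomial v (1 : k) ∉ (f b).1 := by simpa using hv
    refine hv' (aux_mem_of_le huv ?_)
    rw [hU]
    exact Ideal.subset_span ⟨u, hu, rfl⟩
end

section
/- Let k be a field and S = k[x₁,…,xₙ]. If 𝓘 is an infinite collection of artinian monomial ideals of S, then 𝓘 contains an infinite strictly descending chain: there is a sequence I₁ ⊋ I₂ ⊋ I₃ ⊋ ⋯ of ideals all belonging to 𝓘. -/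
/-- Exponents of a finite-codimensional monomial ideal that are not in the ideal are finite. -/
theorem finite_standard_exponents {k : Type*} [Field k] {n : ℕ}
    (I : Ideal (MvPolynomial (Fin n) k)) (hI : IsMonomialIdeal I)
    (hfin : Module.Finite k (MvPolynomial (Fin n) k ⧸ I)) :
    {u : Fin n →₀ ℕ | MvPolynomial.monomial u (1 : k) ∉ I}.Finite := by
  classical
  obtain ⟨U, hU⟩ := hI
  have key : ∀ x : MvPolynomial (Fin n) k, x ∈ I ↔ ∀ v ∈ x.support, ∃ w ∈ U, w ≤ v := by
    intro x
    rw [hU, MvPolynomial.mem_ideal_span_monomial_image]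
  have hli : LinearIndependent k
      (fun u : {u : Fin n →₀ ℕ | MvPolynomial.monomial u (1 : k) ∉ I} =>
        Ideal.Quotient.mkₐ k I (MvPolynomial.monomial u.1 (1 : k))) := by
    rw [linearIndependent_iff']
    intro s g hs i hi
    by_contra hne
    apply i.2
    have hmem : ∑ j ∈ s, g j • MvPolynomial.monomial j.1 (1 : k) ∈ I := by
      apply Ideal.Quotient.eq_zero_iff_mem.1
      rw [← Ideal.Quotient.mkₐ_eq_mk k, map_sum]
      rw [← hs]
      exact Finset.sum_congr rfl fun j _ => map_smul _ _ _
    rw [key] at hmem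
    have hc : i.1 ∈ (∑ j ∈ s, g j • MvPolynomial.monomial j.1 (1 : k)).support := by
      rw [MvPolynomial.mem_support_iff, MvPolynomial.coeff_sum, Finset.sum_eq_single i]
      · simpa using hne
      · intro j _ hj
        have : j.1 ≠ i.1 := fun h => hj (Subtype.ext h)
        simp [MvPolynomial.coeff_monomial, this]
      · exact fun h => absurd hi h
    rw [key]
    intro x hx
    have hx' := MvPolynomial.support_monomial_subset hx
    rw [Finset.mem_singleton.1 hx']
    exact hmem _ hc
  exact Set.finite_coe_iff.1 hli.finite_of_isNoetherian

/-- **Infinite descending chains in infinite families of artinian monomial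
ideals.**  If `𝓘` is an infinite collection of artinian monomial ideals of
`k[x₁,…,xₙ]` (monomial ideals `I` with `S/I` finite-dimensional over `k`), then
`𝓘` contains an infinite strictly descending chain `I₁ ⊋ I₂ ⊋ I₃ ⊋ ⋯`. -/
theorem artinian_monomialIdeals_infinite_descending_chain {k : Type*} [Field k]
    {n : ℕ} (𝓘 : Set (Ideal (MvPolynomial (Fin n) k)))
    (hmono : ∀ I ∈ 𝓘, IsMonomialIdeal I)
    (hart : ∀ I ∈ 𝓘, Module.Finite k (MvPolynomial (Fin n) k ⧸ I))
    (hinf : 𝓘.Infinite) :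
    ∃ f : ℕ → Ideal (MvPolynomial (Fin n) k),
      (∀ m : ℕ, f m ∈ 𝓘) ∧ ∀ m : ℕ, f (m + 1) < f m := by
  classical
  let e := hinf.natEmbedding
  let g : ℕ → Ideal (MvPolynomial (Fin n) k) := fun m => (e m).1
  have hg : ∀ m, g m ∈ 𝓘 := fun m => (e m).2
  have hginj : Function.Injective g := fun a b h => e.injective (Subtype.ext h)
  have hF : ∀ m, {u : Fin n →₀ ℕ | MvPolynomial.monomial u (1 : k) ∉ g m}.Finite :=
    fun m => finite_standard_exponents _ (hmono _ (hg m)) (hart _ (hg m))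
  let L : ℕ → List (Fin n →₀ ℕ) := fun m => (hF m).toFinset.toList
  have hL : ∀ m u, u ∈ L m ↔ MvPolynomial.monomial u (1 : k) ∉ g m := by
    intro m u; simp [L]
  have hpwo := Set.PartiallyWellOrderedOn.partiallyWellOrderedOn_sublistForall₂
    (· ≤ ·) (Set.isPWO_of_wellQuasiOrderedLE (Set.univ : Set (Fin n →₀ ℕ)))
  have : IsPreorder (List (Fin n →₀ ℕ)) (List.SublistForall₂ (· ≤ ·)) :=
    { refl := refl_of _, trans := fun _ _ _ => trans_of _ }
  obtain ⟨φ, hφ⟩ := hpwo.exists_monotone_subseq (f := L) (by intro m; simp)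
  refine ⟨fun m => g (φ m), fun m => hg _, fun m => ?_⟩
  refine lt_of_le_of_ne ?_ (fun h => by
    have := φ.injective (hginj h); omega)
  have hsub := hφ m (m + 1) (Nat.le_succ m)
  rw [List.sublistForall₂_iff] at hsub
  obtain ⟨l, hl, hls⟩ := hsub
  obtain ⟨U, hU⟩ := hmono _ (hg (φ (m + 1)))
  change g (φ (m + 1)) ≤ g (φ m)
  conv_lhs => rw [hU]
  rw [Ideal.span_le]
  rintro _ ⟨u, hu, rfl⟩
  have hu' : MvPolynomial.monomial u (1 : k) ∈ g (φ (m + 1)) := by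
    rw [hU]; exact Ideal.subset_span ⟨u, hu, rfl⟩
  by_contra hnot
  have huL : u ∈ L (φ m) := (hL _ _).2 hnot
  obtain ⟨i, hi, rfl⟩ := List.mem_iff_getElem.1 huL
  have hi' : i < l.length := hl.length_eq ▸ hi
  have hle := hl.get hi hi'
  have hv : l[i] ∈ L (φ (m + 1)) := hls.subset (List.getElem_mem hi')
  apply (hL _ _).1 hv
  have hle' : (L (φ m))[i] ≤ l[i] := hle
  have : MvPolynomial.monomial l[i] (1 : k) =
      MvPolynomial.monomial (l[i] - (L (φ m))[i]) 1 * MvPolynomial.monomial (L (φ m))[i] 1 := by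
    rw [MvPolynomial.monomial_mul, one_mul, tsub_add_cancel_of_le hle']
  rw [this]
  exact Ideal.mul_mem_left _ _ hu'
end
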